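/- Let P be a 1-Sing graded poset of rank d+1. Then for all i > ⌊d/2⌋: ĥ_{d-i}(P) - ĥ_i(P) = (-1)^{d-i+1} [ binom(d,i)·e_P(0̂,1̂) + binom(d,i)·∑_{ρ(t)=d} e_P(0̂,t) + binom(d-1,i-1)·∑_{ρ(s)=1} e_P(s,1̂) ]. -/

import Mathlib

open Finset Polynomial

variable {α : Type*} [Fintype α] [PartialOrder α] [BoundedOrder α] [DecidableEq α]
  [DecidableRel ((· ≤ ·) : α → α → Prop)] [DecidableRel ((· < ·) : α → α → Prop)]

/-- `ρ` is a rank function making `α` a graded poset of rank `d + 1`. -/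
def IsGraded (ρ : α → ℕ) (d : ℕ) : Prop :=
  ρ ⊥ = 0 ∧ ρ ⊤ = d + 1 ∧ (∀ a b : α, a ⋖ b → ρ b = ρ a + 1) ∧
    ∀ a b : α, a < b → ρ a < ρ b

/-- `mu` is the Möbius function of the poset `α`. -/
def IsMobius (mu : α → α → ℤ) : Prop :=
  (∀ a : α, mu a a = 1) ∧
    ∀ a b : α, a < b → ∑ c ∈ Finset.univ.filter (fun c => a ≤ c ∧ c ≤ b), mu a c = 0

/-- `hh q` and `g q` are the toric polynomials `ĥ([0̂,q], x)` and `ĝ([0̂,q], x)` of the lower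
intervals, defined by Stanley's recursion.  Writing `ĥ([0̂,q],x) = ĥ_r + ĥ_{r-1} x + ⋯ + ĥ_0 x^r`
with `r = ρ(q) - 1`, the polynomial `ĝ` has coefficients `ĝ_k = ĥ_{r-k} - ĥ_{r-k+1}` for
`k ≤ ⌊r/2⌋` and `0` above. -/
def ToricPair (ρ : α → ℕ) (hh g : α → Polynomial ℤ) : Prop :=
  hh ⊥ = 1 ∧ g ⊥ = 1 ∧
  (∀ q : α, q ≠ ⊥ →
    hh q = ∑ p ∈ Finset.univ.filter (· < q), g p * (X - 1) ^ (ρ q - 1 - ρ p)) ∧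
  (∀ q : α, q ≠ ⊥ →
    (g q).coeff 0 = (hh q).coeff 0 ∧
    (∀ k, 1 ≤ k → k ≤ (ρ q - 1) / 2 → (g q).coeff k = (hh q).coeff k - (hh q).coeff (k - 1)) ∧
    (∀ k, (ρ q - 1) / 2 < k → (g q).coeff k = 0))


section Helpers

set_option linter.unusedSectionVars false

lemma rho_mono {d : ℕ} {ρ : α → ℕ} (hgr : IsGraded ρ d) {a b : α} (h : a ≤ b) : ρ a ≤ ρ b := by
  rcases h.eq_or_lt with h | h
  · rw [h]
  · exact (hgr.2.2.2 a b h).le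

lemma neg_one_sub {m n : ℕ} (h : m ≤ n) : (-1 : ℤ) ^ (n - m) = (-1) ^ n * (-1) ^ m := by
  obtain ⟨k, rfl⟩ := Nat.exists_eq_add_of_le h
  rw [Nat.add_sub_cancel_left, pow_add, mul_right_comm, ← pow_add, ← two_mul, pow_mul]
  simp

lemma mobius_dual (mu : α → α → ℤ) (hmu : IsMobius mu) (a b : α) (hab : a < b) :
    ∑ c ∈ Finset.univ.filter (fun c => a ≤ c ∧ c ≤ b), mu c b = 0 := by
  let M : Matrix α α ℤ := fun a b => if a ≤ b then mu a b else 0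
  let Z : Matrix α α ℤ := fun a b => if a ≤ b then 1 else 0
  have h1 : M * Z = 1 := by
    ext x y
    rw [Matrix.mul_apply, Matrix.one_apply]
    have : ∑ j, M x j * Z j y = ∑ c ∈ Finset.univ.filter (fun c => x ≤ c ∧ c ≤ y), mu x c := by
      rw [Finset.sum_filter]
      refine Finset.sum_congr rfl fun c _ => ?_
      by_cases h : x ≤ c <;> by_cases h' : c ≤ y <;> simp [M, Z, h, h']
    rw [this]
    split_ifs with h
    · subst h
      have : Finset.univ.filter (fun c => x ≤ c ∧ c ≤ x) = {x} := by
        ext c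
        simp only [mem_filter, mem_univ, true_and, mem_singleton]
        exact ⟨fun h => le_antisymm h.2 h.1, fun h => by simp [h]⟩
      rw [this, Finset.sum_singleton, hmu.1]
    · by_cases h' : x ≤ y
      · exact hmu.2 x y (lt_of_le_of_ne h' h)
      · apply Finset.sum_eq_zero
        intro c hc
        simp only [mem_filter, mem_univ, true_and] at hc
        exact absurd (hc.1.trans hc.2) h'
  have h2 : Z * M = 1 := mul_eq_one_comm.mp h1
  have h3 := congrFun (congrFun h2 a) b
  rw [Matrix.mul_apply, Matrix.one_apply, if_neg hab.ne] at h3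
  rw [← h3, Finset.sum_filter]
  refine Finset.sum_congr rfl fun c _ => ?_
  by_cases h : a ≤ c <;> by_cases h' : c ≤ b <;> simp [M, Z, h, h']

/-- interval error -/
def EE (ρ : α → ℕ) (mu : α → α → ℤ) (s t : α) : ℤ := mu s t - (-1) ^ ρ t * (-1) ^ ρ s

def TT (ρ : α → ℕ) (mu : α → α → ℤ) (s t : α) : ℤ :=
  ∑ c ∈ Finset.univ.filter (fun c => s ≤ c ∧ c ≤ t), EE ρ mu s c

lemma TT_eq (ρ : α → ℕ) (mu : α → α → ℤ) (hmu : IsMobius mu) (s t : α) (h : s < t) :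
    TT ρ mu s t = - ((-1) ^ ρ s *
      ∑ c ∈ Finset.univ.filter (fun c => s ≤ c ∧ c ≤ t), (-1) ^ ρ c) := by
  simp only [TT, EE, Finset.sum_sub_distrib, hmu.2 s t h, Finset.mul_sum, zero_sub]
  simp only [mul_comm]

lemma TT_dual (ρ : α → ℕ) (mu : α → α → ℤ) (hmu : IsMobius mu) (s t : α) (h : s < t) :
    ∑ c ∈ Finset.univ.filter (fun c => s ≤ c ∧ c ≤ t), EE ρ mu c t
      = (-1) ^ ρ t * (-1) ^ ρ s * TT ρ mu s t := by
  rw [TT_eq ρ mu hmu s t h]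
  simp only [EE, Finset.sum_sub_distrib, mobius_dual mu hmu s t h, zero_sub]
  rw [← Finset.mul_sum]
  have : ((-1 : ℤ) ^ ρ s) * (-1) ^ ρ s = 1 := by rw [← pow_add, ← two_mul, pow_mul]; simp
  linear_combination ((-1) ^ ρ t *
    ∑ c ∈ Finset.univ.filter (fun c => s ≤ c ∧ c ≤ t), (-1) ^ ρ c) * this

/-- `f` polynomial -/
noncomputable def FF (ρ : α → ℕ) (g : α → ℤ[X]) (p : α) : ℤ[X] :=
  ∑ r ∈ Finset.univ.filter (· ≤ p), g r * (X - 1) ^ (ρ p - ρ r)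

noncomputable def err (ρ : α → ℕ) (g : α → ℤ[X]) (p : α) : ℤ[X] :=
  reflect (ρ p) (g p) - FF ρ g p

lemma cc_eq {d : ℕ} {ρ : α → ℕ} (hgr : IsGraded ρ d) (mu : α → α → ℤ) (hmu : IsMobius mu)
    (r q : α) (h : r < q) :
    ∑ p ∈ Finset.univ.filter (fun p => r ≤ p ∧ p < q), (-1 : ℤ) ^ (ρ q - 1 - ρ p)
      = 1 + (-1) ^ ρ q * (-1) ^ ρ r * TT ρ mu r q := by
  have hq : 1 ≤ ρ q := by have := hgr.2.2.2 r q h; omega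
  have h1 : ∀ p ∈ Finset.univ.filter (fun p => r ≤ p ∧ p < q), (-1 : ℤ) ^ (ρ q - 1 - ρ p)
      = - (-1) ^ ρ q * (-1) ^ ρ p := by
    intro p hp
    simp only [mem_filter, mem_univ, true_and] at hp
    have := hgr.2.2.2 p q hp.2
    rw [neg_one_sub (by omega), neg_one_sub hq]; ring
  rw [Finset.sum_congr rfl h1, ← Finset.mul_sum, TT_eq ρ mu hmu r q h]
  have h2 : Finset.univ.filter (fun c => r ≤ c ∧ c ≤ q)
      = insert q (Finset.univ.filter (fun c => r ≤ c ∧ c < q)) := by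
    ext c
    simp only [mem_filter, mem_univ, true_and, mem_insert]
    constructor
    · rintro ⟨a, b⟩
      rcases b.eq_or_lt with b | b
      · exact Or.inl b
      · exact Or.inr ⟨a, b⟩
    · rintro (rfl | ⟨a, b⟩)
      · exact ⟨h.le, le_rfl⟩
      · exact ⟨a, b.le⟩
  rw [h2, Finset.sum_insert (by simp)]
  have e1 : ((-1 : ℤ) ^ ρ r) * (-1) ^ ρ r = 1 := by rw [← pow_add, ← two_mul, pow_mul]; simp
  have e2 : ((-1 : ℤ) ^ ρ q) * (-1) ^ ρ q = 1 := by rw [← pow_add, ← two_mul, pow_mul]; simp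
  set S := ∑ c ∈ Finset.univ.filter (fun c => r ≤ c ∧ c < q), (-1 : ℤ) ^ ρ c
  linear_combination ((-1) ^ ρ q * (-1) ^ ρ q + (-1) ^ ρ q * S) * e1 + e2

lemma g_natDegree {ρ : α → ℕ} {hh g : α → ℤ[X]} (ht : ToricPair ρ hh g) (p : α) :
    (g p).natDegree ≤ (ρ p - 1) / 2 := by
  by_cases hp : p = ⊥
  · rw [hp, ht.2.1]; simp
  · rw [natDegree_le_iff_coeff_eq_zero]
    exact (ht.2.2.2 p hp).2.2

lemma reflect_sum' {ι : Type*} (s : Finset ι) (f : ι → ℤ[X]) (N : ℕ) :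
    reflect N (∑ j ∈ s, f j) = ∑ j ∈ s, reflect N (f j) := by
  ext k
  simp [coeff_reflect]

lemma natDegree_X_sub_one_pow (n : ℕ) : ((X - 1 : ℤ[X]) ^ n).natDegree ≤ n := by
  have := natDegree_pow_le (p := (X - 1 : ℤ[X])) (n := n)
  have h2 : (X - 1 : ℤ[X]).natDegree = 1 := by
    simpa using natDegree_X_sub_C (1 : ℤ)
  rw [h2] at this
  omega

lemma reflect_one_X_sub : reflect 1 (X - 1 : ℤ[X]) = 1 - X := by
  have h1 : reflect 1 (X : ℤ[X]) = 1 := by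
    simpa using reflect_monomial (R := ℤ) 1 1
  have h2 : reflect 1 (1 : ℤ[X]) = X := by
    simpa using reflect_monomial (R := ℤ) 1 0
  rw [reflect_sub, h1, h2]

lemma reflect_X_sub_pow (n : ℕ) : reflect n ((X - 1 : ℤ[X]) ^ n) = (1 - X) ^ n := by
  induction n with
  | zero => simpa using reflect_monomial (R := ℤ) 0 0
  | succ n ih =>
    rw [pow_succ, reflect_mul _ _ (natDegree_X_sub_one_pow n)
      (by simpa using natDegree_X_sub_one_pow 1), ih, reflect_one_X_sub, pow_succ]

lemma reflect_hh {d : ℕ} {ρ : α → ℕ} {hh g : α → ℤ[X]} (hgr : IsGraded ρ d)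
    (ht : ToricPair ρ hh g) (mu : α → α → ℤ) (hmu : IsMobius mu) (q : α) (hq : q ≠ ⊥) :
    reflect (ρ q - 1) (hh q) = hh q
      + ∑ r ∈ Finset.univ.filter (· < q),
          C ((-1) ^ ρ q * (-1) ^ ρ r * TT ρ mu r q) * (g r * (X - 1) ^ (ρ q - 1 - ρ r))
      + ∑ p ∈ Finset.univ.filter (· < q), err ρ g p * (1 - X) ^ (ρ q - 1 - ρ p) := by
  have h1 : reflect (ρ q - 1) (hh q)
      = ∑ p ∈ Finset.univ.filter (· < q), reflect (ρ p) (g p) * (1 - X) ^ (ρ q - 1 - ρ p) := by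
    rw [ht.2.2.1 q hq, reflect_sum']
    refine Finset.sum_congr rfl fun p hp => ?_
    simp only [mem_filter, mem_univ, true_and] at hp
    have hlt := hgr.2.2.2 p q hp
    have hd := g_natDegree ht p
    have : ρ q - 1 = ρ p + (ρ q - 1 - ρ p) := by omega
    conv_lhs => rw [this]
    rw [reflect_mul _ _ (by omega) (by simpa using natDegree_X_sub_one_pow _)]
    rw [Nat.add_sub_cancel_left, reflect_X_sub_pow]
  have h2 : ∀ p, reflect (ρ p) (g p) = FF ρ g p + err ρ g p := fun p => by rw [err]; ring
  rw [h1]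
  simp only [h2, add_mul, Finset.sum_add_distrib]
  congr 1
  have h3 : ∑ p ∈ Finset.univ.filter (· < q), FF ρ g p * (1 - X) ^ (ρ q - 1 - ρ p)
      = ∑ p ∈ Finset.univ.filter (· < q), ∑ r ∈ Finset.univ.filter (· ≤ p),
        C ((-1) ^ (ρ q - 1 - ρ p)) * (g r * (X - 1) ^ (ρ q - 1 - ρ r)) := by
    refine Finset.sum_congr rfl fun p hp => ?_
    simp only [mem_filter, mem_univ, true_and] at hp
    have hlt := hgr.2.2.2 p q hp
    rw [FF, Finset.sum_mul]
    refine Finset.sum_congr rfl fun r hr => ?_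
    simp only [mem_filter, mem_univ, true_and] at hr
    have hle := rho_mono hgr hr
    have e : ρ q - 1 - ρ r = (ρ p - ρ r) + (ρ q - 1 - ρ p) := by omega
    have e' : (1 - X : ℤ[X]) = C (-1) * (X - 1) := by simp
    rw [e, e', mul_pow, pow_add, C_pow]
    ring
  rw [h3, Finset.sum_comm' (t' := Finset.univ.filter (· < q))
    (s' := fun r => Finset.univ.filter (fun p => r ≤ p ∧ p < q))]
  · nth_rewrite 1 [ht.2.2.1 q hq]
    rw [← Finset.sum_add_distrib]
    refine Finset.sum_congr rfl fun r hr => ?_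
    simp only [mem_filter, mem_univ, true_and] at hr
    rw [← Finset.sum_mul, ← map_sum, cc_eq hgr mu hmu r q hr, C_add, C_1]
    ring
  · intro p r
    simp only [mem_filter, mem_univ, true_and]
    exact ⟨fun ⟨a, b⟩ => ⟨⟨b, a⟩, lt_of_le_of_lt b a⟩, fun ⟨⟨a, b⟩, _⟩ => ⟨b, a⟩⟩

lemma hh_natDegree {d : ℕ} {ρ : α → ℕ} {hh g : α → ℤ[X]} (hgr : IsGraded ρ d)
    (ht : ToricPair ρ hh g) (q : α) (hq : q ≠ ⊥) : (hh q).natDegree ≤ ρ q - 1 := by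
  rw [ht.2.2.1 q hq]
  refine natDegree_sum_le_of_forall_le _ _ fun p hp => ?_
  simp only [mem_filter, mem_univ, true_and] at hp
  have hlt := hgr.2.2.2 p q hp
  have hd := g_natDegree ht p
  have h1 := natDegree_mul_le (p := g p) (q := (X - 1 : ℤ[X]) ^ (ρ q - 1 - ρ p))
  have h2 := natDegree_X_sub_one_pow (ρ q - 1 - ρ p)
  omega

lemma FF_eq {d : ℕ} {ρ : α → ℕ} {hh g : α → ℤ[X]} (hgr : IsGraded ρ d)
    (ht : ToricPair ρ hh g) (q : α) (hq : q ≠ ⊥) : FF ρ g q = (X - 1) * hh q + g q := by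
  have h2 : Finset.univ.filter (· ≤ q) = insert q (Finset.univ.filter (· < q)) := by
    ext c
    simp only [mem_filter, mem_univ, true_and, mem_insert]
    exact le_iff_eq_or_lt
  rw [FF, h2, Finset.sum_insert (by simp), ht.2.2.1 q hq, Finset.mul_sum, add_comm]
  congr 1
  · refine Finset.sum_congr rfl fun p hp => ?_
    simp only [mem_filter, mem_univ, true_and] at hp
    have hlt := hgr.2.2.2 p q hp
    have : ρ q - ρ p = (ρ q - 1 - ρ p) + 1 := by omega
    rw [this, pow_succ]; ring
  · simp

/-- coefficients of `g` as truncation of `(1-X) h` -/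
lemma g_coeff {ρ : α → ℕ} {hh g : α → ℤ[X]}
    (ht : ToricPair ρ hh g) (q : α) (hq : q ≠ ⊥) (k : ℕ) :
    (g q).coeff k = if k ≤ (ρ q - 1) / 2 then ((1 - X) * hh q).coeff k else 0 := by
  obtain ⟨a, b, c⟩ := ht.2.2.2 q hq
  split_ifs with h
  · rcases k with _ | k
    · rw [a]; simp [mul_coeff_zero]
    · rw [b _ (by omega) h, sub_mul, one_mul, coeff_sub, coeff_X_mul]; simp
  · exact c k (by omega)

lemma err_coeff {d : ℕ} {ρ : α → ℕ} {hh g : α → ℤ[X]} (hgr : IsGraded ρ d)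
    (ht : ToricPair ρ hh g) (q : α) (hq : q ≠ ⊥) (ε : ℤ)
    (hr : reflect (ρ q - 1) (hh q) = hh q + C ε * (X - 1) ^ (ρ q - 1)) (i : ℕ)
    (hi : ρ q < 2 * i ∨ ε = 0) :
    (err ρ g q).coeff i = ε * ((X - 1 : ℤ[X]) ^ ρ q).coeff i := by
  have hpos : 1 ≤ ρ q := by
    have := hgr.2.2.2 ⊥ q (bot_lt_iff_ne_bot.mpr hq); omega
  have hK : reflect (ρ q) ((1 - X) * hh q) = - ((1 - X) * hh q) + C ε * (X - 1) ^ ρ q := by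
    have e : ρ q = 1 + (ρ q - 1) := by omega
    conv_lhs => rw [e]
    rw [reflect_mul _ _ _ (hh_natDegree hgr ht q hq), hr]
    · have : reflect 1 (1 - X : ℤ[X]) = X - 1 := by
        have := reflect_one_X_sub
        rw [← neg_sub, reflect_neg, this]; ring
      rw [this]
      conv_rhs => rw [e, pow_add]
      ring
    · rw [← neg_sub, natDegree_neg]; simpa using natDegree_X_sub_one_pow 1
  have hKi := fun i => congrArg (fun p => coeff p i) hK
  simp only [coeff_reflect, coeff_add, coeff_neg, coeff_C_mul] at hKi
  have hKd : ∀ j, ρ q < j → ((1 - X) * hh q).coeff j = 0 := by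
    intro j hj
    apply coeff_eq_zero_of_natDegree_lt
    have h1 := natDegree_mul_le (p := (1 - X : ℤ[X])) (q := hh q)
    have h2 := hh_natDegree hgr ht q hq
    have h3 : (1 - X : ℤ[X]).natDegree ≤ 1 := by
      rw [← neg_sub, natDegree_neg]; simpa using natDegree_X_sub_one_pow 1
    omega
  have hyd : ∀ j, ρ q < j → ((X - 1 : ℤ[X]) ^ ρ q).coeff j = 0 := by
    intro j hj
    exact coeff_eq_zero_of_natDegree_lt (lt_of_le_of_lt (natDegree_X_sub_one_pow _) hj)
  have hF : FF ρ g q = - ((1 - X) * hh q) + g q := by rw [FF_eq hgr ht q hq]; ring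
  rw [err, hF, coeff_sub, coeff_reflect, coeff_add, coeff_neg, g_coeff ht q hq, g_coeff ht q hq]
  generalize (1 - X) * hh q = K at *
  generalize (X - 1 : ℤ[X]) ^ ρ q = Y at *
  by_cases hiq : i ≤ ρ q
  · have hk := hKi i
    rw [revAt_le hiq] at hk ⊢
    rcases hi with hi | hi
    · rw [if_pos (by omega), if_neg (by omega), hk]; ring
    · subst hi
      split_ifs with h1 h2 h2
      · omega
      · rw [hk]; ring
      · ring
      · have : ρ q - i = i := by omega
        rw [this] at hk
        linarith
  · have : revAt (ρ q) i = i := revAt_eq_self_of_lt (by omega)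
    rw [this, if_neg (by omega), hKd i (by omega), hyd i (by omega)]; ring



lemma EE_zero {d : ℕ} {ρ : α → ℕ} {mu : α → α → ℤ} (hgr : IsGraded ρ d)
    (hsing : ∀ s t : α, s ≤ t → ρ t - ρ s + 1 ≤ d → mu s t = (-1 : ℤ) ^ (ρ t - ρ s))
    (s t : α) (h : s ≤ t) (h' : ρ t - ρ s + 1 ≤ d) : EE ρ mu s t = 0 := by
  rw [EE, hsing s t h h', neg_one_sub (rho_mono hgr h), sub_self]

lemma TT_single {d : ℕ} {ρ : α → ℕ} {mu : α → α → ℤ} (hgr : IsGraded ρ d)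
    (hsing : ∀ s t : α, s ≤ t → ρ t - ρ s + 1 ≤ d → mu s t = (-1 : ℤ) ^ (ρ t - ρ s))
    (s t : α) (h : s ≤ t) (h' : ρ t - ρ s ≤ d) (hd : 1 ≤ d) : TT ρ mu s t = EE ρ mu s t := by
  rw [TT]
  refine Finset.sum_eq_single_of_mem t (by simp [h]) fun c hc hne => ?_
  simp only [mem_filter, mem_univ, true_and] at hc
  have := hgr.2.2.2 c t (lt_of_le_of_ne hc.2 hne)
  exact EE_zero hgr hsing s c hc.1 (by omega)

lemma dual_single {d : ℕ} {ρ : α → ℕ} {mu : α → α → ℤ} (hgr : IsGraded ρ d)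
    (hsing : ∀ s t : α, s ≤ t → ρ t - ρ s + 1 ≤ d → mu s t = (-1 : ℤ) ^ (ρ t - ρ s))
    (s t : α) (h : s ≤ t) (h' : ρ t - ρ s ≤ d) (hd : 1 ≤ d) :
    ∑ c ∈ Finset.univ.filter (fun c => s ≤ c ∧ c ≤ t), EE ρ mu c t = EE ρ mu s t := by
  refine Finset.sum_eq_single_of_mem s (by simp [h]) fun c hc hne => ?_
  simp only [mem_filter, mem_univ, true_and] at hc
  have := hgr.2.2.2 s c (lt_of_le_of_ne hc.1 hne.symm)
  exact EE_zero hgr hsing c t hc.2 (by omega)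

/-- odd-rank interval with Eulerian proper subintervals has zero error -/
lemma EE_odd {d : ℕ} {ρ : α → ℕ} {mu : α → α → ℤ} (hgr : IsGraded ρ d) (hmu : IsMobius mu)
    (hsing : ∀ s t : α, s ≤ t → ρ t - ρ s + 1 ≤ d → mu s t = (-1 : ℤ) ^ (ρ t - ρ s))
    (s t : α) (h : s < t) (h' : ρ t - ρ s = d) (hd : Odd d) : EE ρ mu s t = 0 := by
  have h1 := TT_dual ρ mu hmu s t h
  have hd1 : 1 ≤ d := hd.pos
  rw [dual_single hgr hsing s t h.le h'.le hd1, TT_single hgr hsing s t h.le h'.le hd1,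
    ← neg_one_sub (rho_mono hgr h.le), h', hd.neg_one_pow] at h1
  linarith

lemma err_zero {d : ℕ} {ρ : α → ℕ} {mu : α → α → ℤ} {hh g : α → ℤ[X]} (hgr : IsGraded ρ d)
    (hmu : IsMobius mu) (ht : ToricPair ρ hh g)
    (hsing : ∀ s t : α, s ≤ t → ρ t - ρ s + 1 ≤ d → mu s t = (-1 : ℤ) ^ (ρ t - ρ s)) :
    ∀ n : ℕ, ∀ p : α, ρ p = n → ρ p + 1 ≤ d → err ρ g p = 0 := by
  intro n
  induction n using Nat.strong_induction_on with
  | _ n ih =>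
  intro p hp hpd
  by_cases hb : p = ⊥
  · subst hb
    have : Finset.univ.filter (fun x : α => x ≤ ⊥) = {⊥} := by ext c; simp
    rw [err, FF, this, Finset.sum_singleton, ht.2.1, hgr.1]
    simp
  · have hr := reflect_hh hgr ht mu hmu p hb
    rw [Finset.sum_eq_zero, Finset.sum_eq_zero] at hr
    · ext i
      rw [err_coeff hgr ht p hb 0 (by rw [hr]; simp) i (Or.inr rfl)]; simp
    · intro q hq
      simp only [mem_filter, mem_univ, true_and] at hq
      have := hgr.2.2.2 q p hq
      rw [ih (ρ q) (by omega) q rfl (by omega), zero_mul]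
    · intro q hq
      simp only [mem_filter, mem_univ, true_and] at hq
      rw [TT_single hgr hsing q p hq.le (by omega) (by omega),
        EE_zero hgr hsing q p hq.le (by omega)]
      simp

lemma err_top {d : ℕ} {ρ : α → ℕ} {mu : α → α → ℤ} {hh g : α → ℤ[X]} (hgr : IsGraded ρ d)
    (hmu : IsMobius mu) (ht : ToricPair ρ hh g)
    (hsing : ∀ s t : α, s ≤ t → ρ t - ρ s + 1 ≤ d → mu s t = (-1 : ℤ) ^ (ρ t - ρ s))
    (hd : 1 ≤ d) (t : α) (hρ : ρ t = d) (i : ℕ) (hi : d < 2 * i) :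
    (err ρ g t).coeff i = (-1) ^ d * EE ρ mu ⊥ t * ((X - 1 : ℤ[X]) ^ d).coeff i := by
  have hb : t ≠ ⊥ := by
    rintro rfl
    have := hgr.1
    omega
  have hr := reflect_hh hgr ht mu hmu t hb
  rw [Finset.sum_eq_single_of_mem ⊥ (by simpa using bot_lt_iff_ne_bot.mpr hb),
    Finset.sum_eq_zero (s := Finset.univ.filter (· < t)), hgr.1, ht.2.1,
    TT_single hgr hsing ⊥ t bot_le (by omega) hd] at hr
  · rw [err_coeff hgr ht t hb ((-1) ^ d * EE ρ mu ⊥ t) _ i (Or.inl (by omega)), hρ]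
    rw [hr, hρ]
    simp
  · intro q hq
    simp only [mem_filter, mem_univ, true_and] at hq
    have := hgr.2.2.2 q t hq
    rw [err_zero hgr hmu ht hsing (ρ q) q rfl (by omega), zero_mul]
  · intro q hq hqb
    simp only [mem_filter, mem_univ, true_and] at hq
    have := hgr.2.2.2 ⊥ q (bot_lt_iff_ne_bot.mpr hqb)
    rw [TT_single hgr hsing q t hq.le (by omega) (by omega),
      EE_zero hgr hsing q t hq.le (by omega)]
    simp

lemma coeff_pow (n k : ℕ) (h : k ≤ n) :
    ((X - 1 : ℤ[X]) ^ n).coeff k = (-1) ^ n * (-1) ^ k * n.choose k := by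
  have : (X - 1 : ℤ[X]) = X + C (-1) := by simp [sub_eq_add_neg]
  rw [this, coeff_X_add_C_pow, neg_one_sub h]

lemma rank_lt {d : ℕ} {ρ : α → ℕ} (hgr : IsGraded ρ d) (p : α) (h : p ≠ ⊤) : ρ p ≤ d := by
  have := hgr.2.2.2 p ⊤ (lt_top_iff_ne_top.mpr h)
  have := hgr.2.1
  omega

lemma poset_rank_pos {d : ℕ} {ρ : α → ℕ} (hgr : IsGraded ρ d) (p : α) (h : p ≠ ⊥) : 1 ≤ ρ p := by
  have := hgr.2.2.2 ⊥ p (bot_lt_iff_ne_bot.mpr h)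
  omega

lemma sum_support {ι : Type*} [DecidableEq ι] (s t : Finset ι) (a : ι) (f : ι → ℤ) (hs : a ∈ s)
    (hts : t ⊆ s) (ha : a ∉ t) (h : ∀ x ∈ s, x ≠ a → x ∉ t → f x = 0) :
    ∑ x ∈ s, f x = f a + ∑ x ∈ t, f x := by
  rw [← Finset.sum_insert ha]
  symm
  apply Finset.sum_subset
  · intro x hx
    rcases Finset.mem_insert.mp hx with rfl | hx
    · exact hs
    · exact hts hx
  · intro x hx hn
    rw [Finset.mem_insert, not_or] at hn
    exact h x hx hn.1 hn.2

lemma TT_bot_top {d : ℕ} {ρ : α → ℕ} {mu : α → α → ℤ} (hgr : IsGraded ρ d)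
    (hsing : ∀ s t : α, s ≤ t → ρ t - ρ s + 1 ≤ d → mu s t = (-1 : ℤ) ^ (ρ t - ρ s)) :
    TT ρ mu ⊥ ⊤ = EE ρ mu ⊥ ⊤
      + ∑ t ∈ Finset.univ.filter (fun t : α => ρ t = d), EE ρ mu ⊥ t := by
  rw [TT]
  apply sum_support
  · simp
  · intro x; simp
  · simp [hgr.2.1]
  · intro x _ h1 h2
    simp only [mem_filter, mem_univ, true_and] at h2
    have := rank_lt hgr x h1
    exact EE_zero hgr hsing ⊥ x bot_le (by omega)

lemma dual_bot_top {d : ℕ} {ρ : α → ℕ} {mu : α → α → ℤ} (hgr : IsGraded ρ d) 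
    (hsing : ∀ s t : α, s ≤ t → ρ t - ρ s + 1 ≤ d → mu s t = (-1 : ℤ) ^ (ρ t - ρ s))
    (hd : 1 ≤ d) :
    ∑ c ∈ Finset.univ.filter (fun c : α => ⊥ ≤ c ∧ c ≤ ⊤), EE ρ mu c ⊤ = EE ρ mu ⊥ ⊤
      + ∑ s ∈ Finset.univ.filter (fun s : α => ρ s = 1), EE ρ mu s ⊤ := by
  apply sum_support
  · simp
  · intro x; simp
  · simp [hgr.1]
  · intro x _ h1 h2
    simp only [mem_filter, mem_univ, true_and] at h2
    have := poset_rank_pos hgr x h1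
    have := hgr.2.1
    exact EE_zero hgr hsing x ⊤ le_top (by omega)

lemma g_atom {d : ℕ} {ρ : α → ℕ} {hh g : α → ℤ[X]} (hgr : IsGraded ρ d)
    (ht : ToricPair ρ hh g) (s : α) (hs : ρ s = 1) : g s = 1 := by
  have hb : s ≠ ⊥ := by
    rintro rfl
    have := hgr.1
    omega
  have h1 : Finset.univ.filter (fun x : α => x < s) = {⊥} := by
    ext c
    simp only [mem_filter, mem_univ, true_and, mem_singleton]
    constructor
    · intro h
      by_contra hc
      have := poset_rank_pos hgr c hc
      have := hgr.2.2.2 c s h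
      omega
    · rintro rfl
      exact bot_lt_iff_ne_bot.mpr hb
  have h2 : hh s = 1 := by
    rw [ht.2.2.1 s hb, h1, Finset.sum_singleton, ht.2.1, hs]; simp
  obtain ⟨a, _, c⟩ := ht.2.2.2 s hb
  ext k
  rcases k with _ | k
  · rw [a, h2]
  · rw [c _ (by omega)]; simp [coeff_one]

end Helpers

/-- toric Dehn–Sommerville for 1-Sing posets: for `i > ⌊d/2⌋`,
`ĥ_{d-i} - ĥ_i = (-1)^{d-i+1}[ C(d,i) e(0̂,1̂) + C(d,i) ∑_{ρ(t)=d} e(0̂,t)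
 + C(d-1,i-1) ∑_{ρ(s)=1} e(s,1̂) ]` (here `ĥ_i = coeff of x^{d-i}` in `ĥ(P,x)`, and
the interval errors are `e(0̂,t) = μ(0̂,t) - (-1)^d`, `e(s,1̂) = μ(s,1̂) - (-1)^d`). -/
theorem one_sing_toric_dehn_sommerville (d : ℕ) (ρ : α → ℕ) (mu : α → α → ℤ)
    (hh g : α → Polynomial ℤ)
    (hgr : IsGraded ρ d) (hmu : IsMobius mu) (htoric : ToricPair ρ hh g)
    (hsing : ∀ s t : α, s ≤ t → ρ t - ρ s + 1 ≤ d → mu s t = (-1 : ℤ) ^ (ρ t - ρ s))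
    (i : ℕ) (hi : d / 2 < i) (hid : i ≤ d) :
    (hh ⊤).coeff i - (hh ⊤).coeff (d - i)
      = (-1 : ℤ) ^ (d - i + 1) *
          ((d.choose i : ℤ) * (mu ⊥ ⊤ - (-1 : ℤ) ^ (d + 1))
            + (d.choose i : ℤ) * ∑ t ∈ Finset.univ.filter (fun t : α => ρ t = d),
                (mu ⊥ t - (-1 : ℤ) ^ d)
            + ((d - 1).choose (i - 1) : ℤ) * ∑ s ∈ Finset.univ.filter (fun s : α => ρ s = 1),
                (mu s ⊤ - (-1 : ℤ) ^ d)) := by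
  have hd : 1 ≤ d := by omega
  have hρt := hgr.2.1
  have hρb := hgr.1
  have htb : (⊤ : α) ≠ ⊥ := by
    intro h
    rw [h] at hρt
    omega
  have hE0 : mu ⊥ ⊤ - (-1 : ℤ) ^ (d + 1) = EE ρ mu ⊥ ⊤ := by
    rw [EE, hρt, hρb]; simp
  have hE1 : ∑ t ∈ Finset.univ.filter (fun t : α => ρ t = d), (mu ⊥ t - (-1 : ℤ) ^ d)
      = ∑ t ∈ Finset.univ.filter (fun t : α => ρ t = d), EE ρ mu ⊥ t := by
    refine Finset.sum_congr rfl fun t ht => ?_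
    simp only [mem_filter, mem_univ, true_and] at ht
    rw [EE, ht, hρb]; simp
  have hE2 : ∑ s ∈ Finset.univ.filter (fun s : α => ρ s = 1), (mu s ⊤ - (-1 : ℤ) ^ d)
      = ∑ s ∈ Finset.univ.filter (fun s : α => ρ s = 1), EE ρ mu s ⊤ := by
    refine Finset.sum_congr rfl fun s hs => ?_
    simp only [mem_filter, mem_univ, true_and] at hs
    rw [EE, hs, hρt, pow_succ]; ring
  rw [hE0, hE1, hE2]
  -- the Euler relation
  have hrel := TT_dual ρ mu hmu ⊥ ⊤ (bot_lt_iff_ne_bot.mpr htb)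
  rw [dual_bot_top hgr hsing hd, TT_bot_top hgr hsing, hρt, hρb] at hrel
  have hTs : ∀ s : α, ρ s = 1 → TT ρ mu s ⊤ = EE ρ mu s ⊤ := fun s hs =>
    TT_single hgr hsing s ⊤ le_top (by omega) hd
  have hodd1 : Odd d → ∑ t ∈ Finset.univ.filter (fun t : α => ρ t = d), EE ρ mu ⊥ t = 0 := by
    intro ho
    refine Finset.sum_eq_zero fun t ht => ?_
    simp only [mem_filter, mem_univ, true_and] at ht
    refine EE_odd hgr hmu hsing ⊥ t (bot_lt_iff_ne_bot.mpr ?_) (by omega) ho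
    rintro rfl
    omega
  have hodd2 : Odd d → ∑ s ∈ Finset.univ.filter (fun s : α => ρ s = 1), EE ρ mu s ⊤ = 0 := by
    intro ho
    refine Finset.sum_eq_zero fun t ht => ?_
    simp only [mem_filter, mem_univ, true_and] at ht
    refine EE_odd hgr hmu hsing t ⊤ (lt_top_iff_ne_top.mpr ?_) (by omega) ho
    rintro rfl
    omega
  -- the reflection identity
  have hr := congrArg (fun p => coeff p i) (reflect_hh hgr htoric mu hmu ⊤ htb)
  simp only [coeff_add, finsetSum_coeff, coeff_reflect, coeff_C_mul, hρt,
    Nat.add_sub_cancel] at hr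
  rw [revAt_le hid] at hr
  have hsum1 : ∑ r ∈ Finset.univ.filter (fun r : α => r < ⊤),
      (-1) ^ (d + 1) * (-1) ^ ρ r * TT ρ mu r ⊤ * (g r * (X - 1) ^ (d - ρ r)).coeff i
      = (-1) ^ (d + 1) * TT ρ mu ⊥ ⊤ * ((X - 1 : ℤ[X]) ^ d).coeff i
        + (-1) ^ d * (∑ s ∈ Finset.univ.filter (fun s : α => ρ s = 1), EE ρ mu s ⊤)
          * ((X - 1 : ℤ[X]) ^ (d - 1)).coeff i := by
    rw [sum_support _ (Finset.univ.filter (fun s : α => ρ s = 1)) ⊥]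
    · congr 1
      · rw [hρb, htoric.2.1]; simp
      · rw [Finset.mul_sum, Finset.sum_mul]
        refine Finset.sum_congr rfl fun s hs => ?_
        simp only [mem_filter, mem_univ, true_and] at hs
        rw [hs, hTs s hs, g_atom hgr htoric s hs, pow_succ, one_mul]; ring
    · simpa using bot_lt_iff_ne_bot.mpr htb
    · intro s hs
      simp only [mem_filter, mem_univ, true_and] at hs ⊢
      refine lt_top_iff_ne_top.mpr ?_
      rintro rfl
      omega
    · simp [hρb]
    · intro x _ h1 h2
      simp only [mem_filter, mem_univ, true_and] at h2
      have := poset_rank_pos hgr x h1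
      rw [TT_single hgr hsing x ⊤ le_top (by omega) hd,
        EE_zero hgr hsing x ⊤ le_top (by omega)]
      simp
  have hsum2 : ∑ p ∈ Finset.univ.filter (fun r : α => r < ⊤),
      (err ρ g p * (1 - X) ^ (d - ρ p)).coeff i
      = (-1) ^ d * (∑ t ∈ Finset.univ.filter (fun t : α => ρ t = d), EE ρ mu ⊥ t)
          * ((X - 1 : ℤ[X]) ^ d).coeff i := by
    rw [Finset.mul_sum, Finset.sum_mul]
    symm
    apply Finset.sum_subset_zero_on_sdiff
    · intro s hs
      simp only [mem_filter, mem_univ, true_and] at hs ⊢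
      refine lt_top_iff_ne_top.mpr ?_
      rintro rfl
      omega
    · intro x hx
      simp only [mem_sdiff, mem_filter, mem_univ, true_and] at hx
      have := rank_lt hgr x hx.1.ne
      rw [err_zero hgr hmu htoric hsing (ρ x) x rfl (by omega)]
      simp
    · intro x hx
      simp only [mem_filter, mem_univ, true_and] at hx
      rw [hx, Nat.sub_self, pow_zero, mul_one,
        err_top hgr hmu htoric hsing hd x hx i (by omega)]
  rw [hsum1, hsum2, TT_bot_top hgr hsing, coeff_pow d i hid] at hr
  have hc1 : ((X - 1 : ℤ[X]) ^ (d - 1)).coeff i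
      = - ((-1) ^ d * (-1) ^ i * (d - 1).choose i) := by
    by_cases h : i ≤ d - 1
    · rw [coeff_pow _ _ h, neg_one_sub hd]; ring
    · rw [Nat.choose_eq_zero_of_lt (by omega), coeff_eq_zero_of_natDegree_lt
        (lt_of_le_of_lt (natDegree_X_sub_one_pow _) (by omega))]
      simp
  have hpas : (d.choose i : ℤ) = (d - 1).choose (i - 1) + (d - 1).choose i := by
    have h1 : d = (d - 1) + 1 := by omega
    have h2 : i = (i - 1) + 1 := by omega
    have := Nat.choose_succ_succ' (d - 1) (i - 1)
    rw [← h1, ← h2] at this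
    exact_mod_cast this
  rw [hc1] at hr
  rw [pow_succ, neg_one_sub hid]
  simp only [pow_zero, mul_one] at hrel
  generalize EE ρ mu ⊥ ⊤ = e0 at *
  generalize ∑ t ∈ Finset.univ.filter (fun t : α => ρ t = d), EE ρ mu ⊥ t = e1 at *
  generalize ∑ s ∈ Finset.univ.filter (fun s : α => ρ s = 1), EE ρ mu s ⊤ = e2 at *
  rcases Nat.even_or_odd d with hev | hod
  · rw [pow_succ, hev.neg_one_pow] at hr hrel
    rw [hev.neg_one_pow]
    have : e1 = - 2 * e0 - e2 := by linarith
    rw [this] at hr ⊢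
    rw [hpas] at hr ⊢
    linear_combination -hr
  · rw [hodd1 hod, hodd2 hod, pow_succ, hod.neg_one_pow] at hr
    rw [hodd1 hod, hodd2 hod, hod.neg_one_pow]
    linear_combination -hr
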